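/- Suppose m ≥ 1 is an integer divisible by l(l−1). Then v_{2m − m/l}(I^{(m)}) = 1 and v_d(I^{(m)}) = 0 for every degree d < 2m − m/l; that is, I^{(m)} has exactly one minimal generator of the least degree 2m − m/l and none of smaller degree. -/

import Mathlib

open MvPolynomial Filter

/-- The degree-`d` homogeneous component of a homogeneous ideal `J ⊆ K[x,y,z]`,
as a `K`-vector subspace. -/
noncomputable def degComp {K : Type*} [Field K] (J : Ideal (MvPolynomial (Fin 3) K)) (d : ℕ) :
    Submodule K (MvPolynomial (Fin 3) K) :=
  Submodule.restrictScalars K J ⊓ homogeneousSubmodule (Fin 3) K d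

/-- `dim_K J_d`. -/
noncomputable def hdim {K : Type*} [Field K] (J : Ideal (MvPolynomial (Fin 3) K)) (d : ℕ) : ℕ :=
  Module.finrank K (degComp J d)

/-- The subspace `R_1 · J_{d-1}` of products of linear forms with degree-`(d-1)` elements. -/
noncomputable def oneGen {K : Type*} [Field K] (J : Ideal (MvPolynomial (Fin 3) K)) (d : ℕ) :
    Submodule K (MvPolynomial (Fin 3) K) :=
  Submodule.span K
    {x | ∃ f ∈ homogeneousSubmodule (Fin 3) K 1, ∃ g ∈ degComp J (d - 1), x = f * g}

/-- `v_d(J) = dim_K J_d / (R_1 · J_{d-1})`, the number of minimal generators of `J`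
in degree `d`. -/
noncomputable def vnum {K : Type*} [Field K] (J : Ideal (MvPolynomial (Fin 3) K)) (d : ℕ) : ℕ :=
  Module.finrank K
    (↥(degComp J d) ⧸ Submodule.comap (degComp J d).subtype (oneGen J d))


/-- A ring map sending the coordinates to multiples `p j * w` of a point scales forms. -/
lemma aux_hom {K A : Type*} [Field K] [CommRing A] [Algebra K A] (p : Fin 3 → K) (w : A)
    (θ : MvPolynomial (Fin 3) K →ₐ[K] A) (hθ : ∀ j, θ (X j) = algebraMap K A (p j) * w)
    (n : ℕ) (F : MvPolynomial (Fin 3) K) (hF : F.IsHomogeneous n) :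
    θ F = algebraMap K A (eval p F) * w ^ n := by
  have h1 : θ F = aeval (fun j => algebraMap K A (p j) * w) F := by
    have : θ = aeval (fun j => algebraMap K A (p j) * w) := by
      ext j; simp [hθ]
    rw [this]
  rw [h1, aeval_def, eval₂_eq', eval_eq', map_sum, Finset.sum_mul]
  refine Finset.sum_congr rfl fun d hd => ?_
  have hn : ∑ i, d i = n := by
    have := hF.degree_eq_sum_deg_support hd
    rw [this, ← Finsupp.degree_apply, Finsupp.degree_eq_sum]
  simp only [mul_pow, Finset.prod_mul_distrib, map_mul, map_prod, map_pow]
  rw [Finset.prod_pow_eq_pow_sum, hn, mul_assoc]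

lemma aux_vanish {K A : Type*} [Field K] [CommRing A] [Algebra K A] (p : Fin 3 → K) (w : A)
    (θ : MvPolynomial (Fin 3) K →ₐ[K] A) (hθ : ∀ j, θ (X j) = algebraMap K A (p j) * w)
    (F : MvPolynomial (Fin 3) K) (hF : ∀ n, eval p (homogeneousComponent n F) = 0) :
    θ F = 0 := by
  rw [← sum_homogeneousComponent F, map_sum]
  refine Finset.sum_eq_zero fun n _ => ?_
  rw [aux_hom p w θ hθ n _ (homogeneousComponent_isHomogeneous n F), hF]
  simp

/-- polynomials `f` with `ℓ^(m-k) ∣ coeff f k`. -/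
def auxN {S : Type*} [CommRing S] (ℓ : S) (m : ℕ) : Ideal (Polynomial S) where
  carrier := {f | ∀ k, ℓ ^ (m - k) ∣ f.coeff k}
  add_mem' := by
    intro f g hf hg k
    rw [Polynomial.coeff_add]
    exact dvd_add (hf k) (hg k)
  zero_mem' := by intro k; simp
  smul_mem' := by
    intro c f hf k
    rw [smul_eq_mul, Polynomial.coeff_mul]
    refine Finset.dvd_sum fun x hx => ?_
    rw [Finset.HasAntidiagonal.mem_antidiagonal] at hx
    exact Dvd.dvd.mul_left ((pow_dvd_pow ℓ (by omega)).trans (hf x.2)) _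

lemma auxN_pow {S : Type*} [CommRing S] (ℓ : S) (m : ℕ) : (auxN ℓ 1) ^ m ≤ auxN ℓ m := by
  induction m with
  | zero => intro f _ k; simp
  | succ m ih =>
    rw [pow_succ]
    refine (Ideal.mul_mono_left ih).trans ?_
    rw [Ideal.mul_le]
    intro f hf g hg k
    rw [Polynomial.coeff_mul]
    refine Finset.dvd_sum fun x hx => ?_
    rw [Finset.HasAntidiagonal.mem_antidiagonal] at hx
    have h1 := hf x.1
    have h2 := hg x.2
    have := mul_dvd_mul h1 h2
    rw [← pow_add] at this
    exact (pow_dvd_pow ℓ (by omega)).trans this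

/-- The binary linear form vanishing at `(a,b)`. -/
noncomputable def auxl {K : Type*} [Field K] (a b : K) : MvPolynomial (Fin 2) K :=
  C b * X 0 - C a * X 1

lemma auxl_hom {K : Type*} [Field K] (a b : K) : (auxl a b).IsHomogeneous 1 :=
  (isHomogeneous_C_mul_X b 0).sub (isHomogeneous_C_mul_X a 1)

lemma auxl_eval {K : Type*} [Field K] (a b c d : K) : eval ![c, d] (auxl a b) = b * c - a * d := by
  simp [auxl]

lemma auxl_ne {K : Type*} [Field K] (a b : K) (h : a ≠ 0 ∨ b ≠ 0) : auxl a b ≠ 0 := by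
  intro h0
  have h1 := auxl_eval a b 1 0
  have h2 := auxl_eval a b 0 1
  rw [h0] at h1 h2
  simp at h1 h2
  rcases h with h | h
  · exact h h2
  · exact h h1.symm

lemma auxl_irr {K : Type*} [Field K] (a b : K) (h : a ≠ 0 ∨ b ≠ 0) : Irreducible (auxl a b) := by
  refine irreducible_of_totalDegree_eq_one ((auxl_hom a b).totalDegree (auxl_ne a b h)) ?_
  intro x hx
  rw [isUnit_iff_ne_zero]
  rintro rfl
  apply auxl_ne a b h
  ext i
  simpa using hx i

lemma auxl_relprime {K : Type*} [Field K] (a b c d : K) (h : a ≠ 0 ∨ b ≠ 0)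
    (hne : a * d ≠ b * c) : IsRelPrime (auxl a b) (auxl c d) := by
  rw [(auxl_irr a b h).isRelPrime_iff_not_dvd]
  rintro ⟨g, hg⟩
  have := congrArg (eval ![a, b]) hg
  rw [map_mul, auxl_eval, auxl_eval] at this
  apply hne
  linear_combination this

/-- Mod the form vanishing at `(a,b)`, the coordinates are proportional to `(a,b)`. -/
lemma auxl_w {K : Type*} [Field K] (a b : K) (h : a ≠ 0 ∨ b ≠ 0) :
    ∃ w : MvPolynomial (Fin 2) K, auxl a b ∣ X 0 - C a * w ∧ auxl a b ∣ X 1 - C b * w := by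
  rcases h with h | h
  · refine ⟨C a⁻¹ * X 0, ?_, ⟨-C a⁻¹, ?_⟩⟩
    · rw [← mul_assoc, ← C_mul, mul_inv_cancel₀ h]; simp
    · have : (C a * C a⁻¹ : MvPolynomial (Fin 2) K) = 1 := by
        rw [← C_mul, mul_inv_cancel₀ h, C_1]
      unfold auxl
      linear_combination (-X 1) * this
  · refine ⟨C b⁻¹ * X 1, ⟨C b⁻¹, ?_⟩, ?_⟩
    · have : (C b * C b⁻¹ : MvPolynomial (Fin 2) K) = 1 := by
        rw [← C_mul, mul_inv_cancel₀ h, C_1]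
      unfold auxl
      linear_combination (-X 0) * this
    · rw [← mul_assoc, ← C_mul, mul_inv_cancel₀ h]; simp

/-- Coordinate change. -/
noncomputable def auxpsi {K : Type*} [Field K] (q u v : Fin 3 → K) :
    MvPolynomial (Fin 3) K →ₐ[K] MvPolynomial (Fin 3) K :=
  aeval (fun j => C (q j) * X 0 + C (u j) * X 1 + C (v j) * X 2)

lemma auxpsi_hom {K : Type*} [Field K] (q u v : Fin 3 → K) (d : ℕ)
    (F : MvPolynomial (Fin 3) K) (hF : F.IsHomogeneous d) : (auxpsi q u v F).IsHomogeneous d := by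
  have := hF.aeval (fun j => C (q j) * X 0 + C (u j) * X 1 + C (v j) * X 2 :
    Fin 3 → MvPolynomial (Fin 3) K) (n := 1) (fun j =>
      ((isHomogeneous_C_mul_X _ _).add (isHomogeneous_C_mul_X _ _)).add (isHomogeneous_C_mul_X _ _))
  rw [one_mul] at this
  exact this

lemma auxpsi_inj {K : Type*} [Field K] [CharZero K] (q u v : Fin 3 → K)
    (hspan : ∀ x : Fin 3 → K, ∃ c a b : K, x = c • q + a • u + b • v) :
    Function.Injective (auxpsi q u v) := by
  rw [injective_iff_map_eq_zero]
  intro F hF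
  apply MvPolynomial.funext
  intro x
  obtain ⟨c, a, b, rfl⟩ := hspan x
  have h := congrArg (eval ![c, a, b]) hF
  have h2 : eval ![c, a, b] (auxpsi q u v F) = eval (c • q + a • u + b • v) F := by
    have : ((aeval ![c, a, b]).comp (auxpsi q u v) : MvPolynomial (Fin 3) K →ₐ[K] K)
        = aeval (c • q + a • u + b • v) := by
      ext j
      simp [auxpsi]
      ring
    have := DFunLike.congr_fun this F
    simpa [aeval_eq_eval] using this
  rw [← h2, h]
  simp

noncomputable def auxphi {K : Type*} [Field K] (q u v : Fin 3 → K) :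
    MvPolynomial (Fin 3) K →ₐ[K] Polynomial (MvPolynomial (Fin 2) K) :=
  (finSuccEquiv K 2).toAlgHom.comp (auxpsi q u v)

lemma auxphi_X {K : Type*} [Field K] (q u v : Fin 3 → K) (j : Fin 3) :
    auxphi q u v (X j) = Polynomial.C (C (q j)) * Polynomial.X +
      Polynomial.C (C (u j) * X 0 + C (v j) * X 1) := by
  have h1 : finSuccEquiv K 2 (X 1) = Polynomial.C (X 0) := finSuccEquiv_X_succ (j := 0)
  have h2 : finSuccEquiv K 2 (X 2) = Polynomial.C (X 1) := finSuccEquiv_X_succ (j := 1)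
  have h3 : ∀ r : K, finSuccEquiv K 2 (C r) = Polynomial.C (C r) := fun r => by
    simp [finSuccEquiv_apply]
  simp [auxphi, auxpsi, h1, h2, h3, finSuccEquiv_X_zero]
  ring

lemma auxphi_on {K : Type*} [Field K] (q u v : Fin 3 → K) (a b : K) (h : a ≠ 0 ∨ b ≠ 0)
    (F : MvPolynomial (Fin 3) K)
    (hF : ∀ n, eval (a • u + b • v) (homogeneousComponent n F) = 0) :
    auxphi q u v F ∈ auxN (auxl a b) 1 := by
  obtain ⟨w, hw0, hw1⟩ := auxl_w a b h
  let I := Ideal.span {auxl a b}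
  let θ : MvPolynomial (Fin 3) K →ₐ[K] (MvPolynomial (Fin 2) K ⧸ I) :=
    (Ideal.Quotient.mkₐ K I).comp
      (((Polynomial.aeval (R := MvPolynomial (Fin 2) K) (0 : MvPolynomial (Fin 2) K)).restrictScalars K).comp
        (auxphi q u v))
  have hθ : θ F = 0 := by
    refine aux_vanish (a • u + b • v) (Ideal.Quotient.mk I w) θ ?_ F hF
    intro j
    have e : θ (X j) = Ideal.Quotient.mk I (C (u j) * X 0 + C (v j) * X 1) := by
      simp [θ, auxphi_X]
    have e2 : algebraMap K (MvPolynomial (Fin 2) K ⧸ I) ((a • u + b • v) j)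
        = Ideal.Quotient.mk I (C ((a • u + b • v) j)) := rfl
    rw [e, e2, ← map_mul, Ideal.Quotient.eq, Ideal.mem_span_singleton]
    have := dvd_add (hw0.mul_left (C (u j))) (hw1.mul_left (C (v j)))
    convert this using 1
    simp
    ring
  intro k
  rcases k with _ | k
  · have e : θ F = Ideal.Quotient.mk I ((auxphi q u v F).coeff 0) := by
      simp [θ, Polynomial.coeff_zero_eq_aeval_zero]
    rw [e, Ideal.Quotient.eq_zero_iff_mem, Ideal.mem_span_singleton] at hθ
    simpa using hθ
  · simp

lemma auxphi_off {K : Type*} [Field K] (q u v : Fin 3 → K)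
    (F : MvPolynomial (Fin 3) K)
    (hF : ∀ n, eval q (homogeneousComponent n F) = 0) :
    auxphi q u v F ∈ Ideal.map (Polynomial.C) (idealOfVars (Fin 2) K) := by
  let θ : MvPolynomial (Fin 3) K →ₐ[K] (Polynomial K) :=
    (Polynomial.mapAlgHom (aeval (0 : Fin 2 → K))).comp (auxphi q u v)
  have hθ : θ F = 0 := by
    refine aux_vanish q Polynomial.X θ ?_ F hF
    intro j
    simp [θ, auxphi_X]
  rw [Ideal.mem_map_C_iff]
  intro n
  have h1 := congrArg (fun f => Polynomial.coeff f n) hθ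
  simp [θ] at h1
  rw [← pow_one (idealOfVars (Fin 2) K), mem_pow_idealOfVars_iff']
  intro x hx
  have : x = 0 := by
    rw [Nat.lt_one_iff] at hx
    exact (Finsupp.degree_eq_zero_iff x).mp hx
  subst this
  exact h1

/-- Core: the coefficients. -/
lemma aux_coeff {K : Type*} [Field K] (q u v : Fin 3 → K) (l m d : ℕ)
    (a b : Fin l → K) (hab : ∀ i, a i ≠ 0 ∨ b i ≠ 0)
    (hne : ∀ i j, i ≠ j → a i * b j ≠ b i * a j)
    (F : MvPolynomial (Fin 3) K) (hF : F.IsHomogeneous d)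
    (hon : ∀ i, auxphi q u v F ∈ auxN (auxl (a i) (b i)) m)
    (hoff : ∀ k, (auxphi q u v F).coeff k ∈ (idealOfVars (Fin 2) K) ^ m)
    (k : ℕ) (hk : (auxphi q u v F).coeff k ≠ 0) :
    m + k ≤ d ∧ l * (m - k) + k ≤ d ∧
      (l * (m - k) + k = d → ∃ c : K, (auxphi q u v F).coeff k =
        C c * (∏ i, auxl (a i) (b i)) ^ (m - k)) := by
  have hFh := auxpsi_hom q u v d F hF
  have hkd : k ≤ d := by
    by_contra hlt
    apply hk
    ext x
    change ((finSuccEquiv K 2 (auxpsi q u v F)).coeff k).coeff x = _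
    rw [finSuccEquiv_coeff_coeff, hFh.coeff_eq_zero]
    · simp
    · rw [Finsupp.degree_eq_sum, Fin.sum_univ_succ]
      simp
      omega
  set f := (auxphi q u v F).coeff k with hf
  have hfh : f.IsHomogeneous (d - k) :=
    hFh.finSuccEquiv_coeff_isHomogeneous k (d - k) (by omega)
  have hdeg := hfh.totalDegree hk
  refine ⟨?_, ?_⟩
  · have h := hoff k
    rw [mem_pow_idealOfVars_iff] at h
    obtain ⟨x, hx⟩ := Finset.nonempty_iff_ne_empty.mpr (mt support_eq_empty.mp hk)
    have h1 := h x hx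
    have h2 := hfh.degree_eq_sum_deg_support hx
    rw [← Finsupp.degree_apply] at h2
    omega
  · have hdvd : (∏ i, auxl (a i) (b i)) ^ (m - k) ∣ f := by
      rw [← Finset.prod_pow]
      refine Fintype.prod_dvd_of_isRelPrime ?_ (fun i => hon i k)
      intro i j hij
      exact IsRelPrime.pow (auxl_relprime _ _ _ _ (hab i) (hne i j hij))
    obtain ⟨g, hg⟩ := hdvd
    have hg0 : g ≠ 0 := by rintro rfl; apply hk; simpa using hg
    have hBh : (∏ i, auxl (a i) (b i)).IsHomogeneous l := by
      have := IsHomogeneous.prod Finset.univ (fun i => auxl (a i) (b i)) (fun _ => 1)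
        (fun i _ => auxl_hom _ _)
      simpa using this
    have hB0 : (∏ i, auxl (a i) (b i)) ^ (m - k) ≠ 0 :=
      pow_ne_zero _ (Finset.prod_ne_zero_iff.mpr fun i _ => auxl_ne _ _ (hab i))
    have h1 : totalDegree f = l * (m - k) + totalDegree g := by
      rw [hg, totalDegree_mul_of_isDomain hB0 hg0, (hBh.pow (m - k)).totalDegree hB0]
    refine ⟨by omega, fun heq => ?_⟩
    have h2 : g.totalDegree = 0 := by omega
    rw [totalDegree_eq_zero_iff_eq_C] at h2
    refine ⟨coeff 0 g, ?_⟩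
    rw [← h2, hg, mul_comm]


lemma aux_arith (l a k d : ℕ) (hl : 2 < l) (h1 : l * a + k ≤ d)
    (h2 : l * (l * a - k) + k ≤ d) (h3 : d ≤ 2 * (l * a) - a) :
    d = 2 * (l * a) - a ∧ k = l * a - a ∧ l * a - k = a ∧ l * (l * a - k) + k = d := by
  obtain ⟨r, rfl⟩ : ∃ r, l = r + 1 := ⟨l - 1, by omega⟩
  have e : (r + 1) * a = r * a + a := by ring
  have e2 : 2 * ((r + 1) * a) - a = 2 * (r * a) + a := by omega
  rw [e2] at h3 ⊢
  have hk : k ≤ r * a := by omega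
  obtain ⟨t, ht⟩ : ∃ t, (r + 1) * a = k + t := ⟨(r + 1) * a - k, by omega⟩
  have e3 : (r + 1) * a - k = t := by omega
  rw [e3] at h2 ⊢
  have e4 : (r + 1) * t = r * t + t := by ring
  have h5 : r * t ≤ r * a := by omega
  have h6 : t ≤ a := Nat.le_of_mul_le_mul_left h5 (by omega)
  have h7 : t = a := by omega
  subst h7
  omega

lemma aux_lin {K : Type*} [Field K] (p : Fin 3 → K) (I : Ideal (MvPolynomial (Fin 3) K))
    (hI : ∀ F, F ∈ I ↔ ∀ n, eval p (homogeneousComponent n F) = 0)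
    (F : MvPolynomial (Fin 3) K) (n : ℕ) (hF : F.IsHomogeneous n) (h0 : eval p F = 0) : F ∈ I := by
  rw [hI]
  intro k
  rw [homogeneousComponent_of_mem ((mem_homogeneousSubmodule n F).mpr hF)]
  split_ifs <;> simp [h0]

/-- A linear form with given coefficients. -/
noncomputable def auxlin {K : Type*} [Field K] (c : Fin 3 → K) : MvPolynomial (Fin 3) K :=
  ∑ j, C (c j) * X j

lemma auxlin_hom {K : Type*} [Field K] (c : Fin 3 → K) : (auxlin c).IsHomogeneous 1 :=
  IsHomogeneous.sum _ _ _ fun _ _ => isHomogeneous_C_mul_X _ _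

lemma auxlin_eval {K : Type*} [Field K] (c x : Fin 3 → K) :
    eval x (auxlin c) = ∑ j, c j * x j := by
  simp [auxlin]

lemma auxlin_ne {K : Type*} [Field K] (c : Fin 3 → K) (hc : c ≠ 0) : auxlin c ≠ 0 := by
  intro h
  apply hc
  ext j
  have := auxlin_eval c (Pi.single j 1)
  rw [h] at this
  simpa [Pi.single_apply] using this.symm

lemma vnum_zero {K : Type*} [Field K] (J : Ideal (MvPolynomial (Fin 3) K)) (d : ℕ)
    (h : degComp J d = ⊥) : vnum J d = 0 := by
  unfold vnum
  have : Subsingleton (degComp J d) := by rw [h]; infer_instance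
  have : Subsingleton (↥(degComp J d) ⧸ Submodule.comap (degComp J d).subtype (oneGen J d)) :=
    (Submodule.mkQ_surjective _).subsingleton
  exact Module.finrank_zero_of_subsingleton

lemma vnum_first {K : Type*} [Field K] (J : Ideal (MvPolynomial (Fin 3) K)) (d : ℕ)
    (h : degComp J (d - 1) = ⊥) : vnum J d = Module.finrank K (degComp J d) := by
  unfold vnum
  have h1 : oneGen J d = ⊥ := by
    unfold oneGen
    rw [Submodule.span_eq_bot]
    rintro x ⟨f, _, g, hg, rfl⟩
    rw [h, Submodule.mem_bot] at hg
    simp [hg]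
  have h2 : Submodule.comap (degComp J d).subtype (oneGen J d) = ⊥ := by
    rw [h1, Submodule.comap_bot, Submodule.ker_subtype]
  exact (Submodule.quotEquivOfEqBot _ h2).finrank_eq

theorem stmt_6
    (K : Type*) [Field K] [CharZero K]
    -- `l > 2` points on a line plus one point off the line
    (l : ℕ) (hl : 2 < l)
    (p : Fin (l + 1) → Fin 3 → K) (hp0 : ∀ i, p i ≠ 0)
    (hdist : ∀ i j, i ≠ j → ∀ c : K, c • p i ≠ p j)
    (L : Fin 3 → K) (hL : L ≠ 0)
    (hon : ∀ i : Fin (l + 1), (i : ℕ) < l → ∑ j, L j * p i j = 0)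
    (hoff : ∑ j, L j * p (Fin.last l) j ≠ 0)
    -- `P i` is the homogeneous prime ideal of all forms vanishing at `p i`
    (P : Fin (l + 1) → Ideal (MvPolynomial (Fin 3) K))
    (hP : ∀ i F, F ∈ P i ↔ ∀ n, eval (p i) (homogeneousComponent n F) = 0)
    -- the uniform fat point ideal `I^{(m)} = P_1^m ∩ ⋯ ∩ P_{l+1}^m`
    (m : ℕ) (hm : 1 ≤ m) (hdvd : l * (l - 1) ∣ m)
    (Im : Ideal (MvPolynomial (Fin 3) K)) (hIm : Im = ⨅ i, P i ^ m) :
    vnum Im (2 * m - m / l) = 1 ∧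
    ∀ d : ℕ, d < 2 * m - m / l → vnum Im d = 0 := by
  have hlast : ∀ i : Fin l, i.castSucc ≠ Fin.last l := fun i => (Fin.castSucc_lt_last i).ne
  set q := p (Fin.last l) with hq
  let i0 : Fin l := ⟨0, by omega⟩
  let i1 : Fin l := ⟨1, by omega⟩
  have hi01 : i0.castSucc ≠ i1.castSucc := by
    simp [i0, i1, Fin.ext_iff]
  set u := p i0.castSucc with hu
  set v := p i1.castSucc with hv
  have hLp : ∀ i : Fin l, ∑ j, L j * p i.castSucc j = 0 := fun i => hon _ (by simp)
  -- linear independence and span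
  have hLcomb : ∀ c a b : K, ∑ j, L j * (c • q + a • u + b • v) j = c * ∑ j, L j * q j := by
    intro c a b
    have h1 := hLp i0
    have h2 := hLp i1
    rw [← hu] at h1
    rw [← hv] at h2
    simp only [Fin.sum_univ_three] at h1 h2 ⊢
    simp
    linear_combination a * h1 + b * h2
  have hli : LinearIndependent K ![q, u, v] := by
    rw [Fintype.linearIndependent_iff]
    intro g hg
    simp only [Fin.sum_univ_three, Matrix.cons_val_zero, Matrix.cons_val_one,
      Matrix.cons_val] at hg
    have h1 := hLcomb (g 0) (g 1) (g 2)
    rw [hg] at h1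
    have h0 : g 0 = 0 := by
      simp at h1
      exact h1.resolve_right hoff
    rw [h0, zero_smul, zero_add] at hg
    have h2 : g 2 = 0 := by
      by_contra h2
      apply hdist _ _ hi01 (-(g 2)⁻¹ * g 1)
      rw [← hu, ← hv]
      have : v = (g 2)⁻¹ • (g 2 • v) := by rw [smul_smul, inv_mul_cancel₀ h2, one_smul]
      rw [this, eq_neg_of_add_eq_zero_right hg, smul_neg, smul_smul, neg_mul, neg_smul]
    rw [h2, zero_smul, add_zero] at hg
    have h3 : g 1 = 0 := (smul_eq_zero.mp hg).resolve_right (hp0 _)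
    intro i
    fin_cases i <;> assumption
  have hspan : ∀ x : Fin 3 → K, ∃ c a b : K, x = c • q + a • u + b • v := by
    intro x
    have htop := hli.span_eq_top_of_card_eq_finrank (by simp)
    have hx : x ∈ Submodule.span K (Set.range ![q, u, v]) := htop ▸ Submodule.mem_top
    rw [Submodule.mem_span_range_iff_exists_fun] at hx
    obtain ⟨c, hc⟩ := hx
    refine ⟨c 0, c 1, c 2, ?_⟩
    rw [← hc]
    simp [Fin.sum_univ_three]
  have hab0 : ∀ i : Fin l, ∃ a b : K, p i.castSucc = a • u + b • v := by
    intro i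
    obtain ⟨c, a, b, h⟩ := hspan (p i.castSucc)
    have h1 := hLcomb c a b
    rw [← h, hLp] at h1
    have hc : c = 0 := (mul_eq_zero.mp h1.symm).resolve_right hoff
    exact ⟨a, b, by rw [h, hc]; simp⟩
  choose a b hpab using hab0
  have hab : ∀ i, a i ≠ 0 ∨ b i ≠ 0 := by
    intro i
    by_contra! h
    apply hp0 i.castSucc
    rw [hpab, h.1, h.2]
    simp
  have hne : ∀ i j, i ≠ j → a i * b j ≠ b i * a j := by
    intro i j hij h
    have hij' : i.castSucc ≠ j.castSucc := fun h => hij (Fin.castSucc_injective _ h)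
    rcases hab i with h0 | h0
    · apply hdist _ _ hij' (a j / a i)
      rw [hpab, hpab, smul_add, smul_smul, smul_smul]
      congr 2
      · field_simp
      · field_simp
        linear_combination -h
    · apply hdist _ _ hij' (b j / b i)
      rw [hpab, hpab, smul_add, smul_smul, smul_smul]
      congr 2
      · field_simp
        linear_combination h
      · field_simp
  obtain ⟨s, hs⟩ : l ∣ m := (dvd_mul_right _ _).trans hdvd
  have hml : m / l = s := by rw [hs]; exact Nat.mul_div_cancel_left _ (by omega)
  rw [hml]
  have hinj : Function.Injective (auxphi q u v) :=
    (finSuccEquiv K 2).injective.comp (auxpsi_inj q u v hspan)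
  have hPon : ∀ F ∈ Im, ∀ i, auxphi q u v F ∈ auxN (auxl (a i) (b i)) m := by
    intro F hF i
    rw [hIm, Ideal.mem_iInf] at hF
    have hle : P i.castSucc ≤ Ideal.comap (auxphi q u v) (auxN (auxl (a i) (b i)) 1) := by
      intro G hG
      rw [hP, hpab] at hG
      exact auxphi_on q u v _ _ (hab i) G hG
    have := Ideal.le_comap_pow (auxphi q u v) m (Ideal.pow_right_mono hle m (hF i.castSucc))
    exact auxN_pow _ _ this
  have hPoff : ∀ F ∈ Im, ∀ k, (auxphi q u v F).coeff k ∈ (idealOfVars (Fin 2) K) ^ m := by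
    intro F hF
    rw [hIm, Ideal.mem_iInf] at hF
    have hle : P (Fin.last l) ≤ Ideal.comap (auxphi q u v)
        (Ideal.map (Polynomial.C) (idealOfVars (Fin 2) K)) := by
      intro G hG
      rw [hP] at hG
      exact auxphi_off q u v G hG
    have := Ideal.le_comap_pow (auxphi q u v) m (Ideal.pow_right_mono hle m (hF (Fin.last l)))
    rw [← Ideal.map_pow] at this
    exact Ideal.mem_map_C_iff.mp this
  have hkey : ∀ d F, F ∈ degComp Im d → d ≤ 2 * m - s → ∀ k, (auxphi q u v F).coeff k ≠ 0 →
      d = 2 * m - s ∧ k = m - s ∧ ∃ c : K, (auxphi q u v F).coeff k =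
        C c * (∏ i, auxl (a i) (b i)) ^ s := by
    intro d F hF hd k hk
    obtain ⟨h1, h2, h3⟩ := aux_coeff q u v l m d a b hab hne F hF.2 (hPon F hF.1)
      (hPoff F hF.1) k hk
    rw [hs] at h1 h2 h3 hd ⊢
    obtain ⟨e1, e2, e3, e4⟩ := aux_arith l s k d hl h1 h2 hd
    refine ⟨e1, e2, ?_⟩
    have := h3 e4
    rwa [e3] at this
  have hbot : ∀ d, d < 2 * m - s → degComp Im d = ⊥ := by
    intro d hd
    rw [Submodule.eq_bot_iff]
    intro F hF
    apply hinj
    rw [map_zero]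
    ext1 k
    by_contra hk
    have := (hkey d F hF hd.le k (by simpa using hk)).1
    omega
  refine ⟨?_, fun d hd => vnum_zero _ _ (hbot d hd)⟩
  have hsm : s ≤ m := by rw [hs]; exact Nat.le_mul_of_pos_left _ (by omega)
  rw [vnum_first _ _ (hbot _ (by omega))]
  -- the generator
  let Λ : Fin l → MvPolynomial (Fin 3) K := fun i => auxlin (crossProduct q (p i.castSucc))
  let F0 : MvPolynomial (Fin 3) K := auxlin L ^ (m - s) * ∏ i, Λ i ^ s
  have hcross : ∀ i : Fin l, crossProduct q (p i.castSucc) ≠ 0 := by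
    intro i
    rw [crossProduct_ne_zero_iff_linearIndependent, LinearIndependent.pair_iff' (hp0 _)]
    exact hdist _ _ (hlast i).symm
  have hΛq : ∀ i, Λ i ∈ P (Fin.last l) := fun i =>
    aux_lin _ _ (hP _) _ 1 (auxlin_hom _) (by
      rw [auxlin_eval, ← hq]
      simp [cross_apply, Fin.sum_univ_three]
      ring)
  have hΛp : ∀ i, Λ i ∈ P i.castSucc := fun i =>
    aux_lin _ _ (hP _) _ 1 (auxlin_hom _) (by
      rw [auxlin_eval]
      simp [cross_apply, Fin.sum_univ_three]
      ring)
  have hLp' : ∀ i : Fin l, auxlin L ∈ P i.castSucc := fun i =>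
    aux_lin _ _ (hP _) _ 1 (auxlin_hom _) (by rw [auxlin_eval, hLp])
  have hF0 : F0 ∈ degComp Im (2 * m - s) := by
    refine ⟨?_, ?_⟩
    · change F0 ∈ Im
      rw [hIm, Ideal.mem_iInf]
      intro i
      refine Fin.lastCases ?_ (fun i => ?_) i
      · apply Ideal.mul_mem_left
        have : (∏ i, Λ i ^ s) ∈ ∏ _i : Fin l, P (Fin.last l) ^ s :=
          Ideal.prod_mem_prod fun i _ => Ideal.pow_mem_pow (hΛq i) s
        rw [Finset.prod_const, Finset.card_univ, Fintype.card_fin, ← pow_mul, mul_comm, ← hs] at this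
        exact this
      · have h1 : auxlin L ^ (m - s) ∈ P i.castSucc ^ (m - s) := Ideal.pow_mem_pow (hLp' i) _
        have h2 : (∏ i, Λ i ^ s) ∈ P i.castSucc ^ s :=
          Ideal.mem_of_dvd _ (Finset.dvd_prod_of_mem _ (Finset.mem_univ i))
            (Ideal.pow_mem_pow (hΛp i) s)
        have h3 := Ideal.mul_mem_mul h1 h2
        rwa [← pow_add, Nat.sub_add_cancel hsm] at h3
    · change F0.IsHomogeneous (2 * m - s)
      have h1 := (auxlin_hom L).pow (m - s)
      have h2 : (∏ i, Λ i ^ s).IsHomogeneous (∑ _i : Fin l, 1 * s) :=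
        IsHomogeneous.prod _ _ _ fun i _ => (auxlin_hom _).pow s
      have h3 := h1.mul h2
      convert h3 using 1
      simp
      rw [← hs]
      omega
  have hF0ne : F0 ≠ 0 :=
    mul_ne_zero (pow_ne_zero _ (auxlin_ne L hL))
      (Finset.prod_ne_zero_iff.mpr fun i _ => pow_ne_zero _ (auxlin_ne _ (hcross i)))
  have hform : ∀ F ∈ degComp Im (2 * m - s), ∃ c : K, auxphi q u v F =
      c • Polynomial.monomial (m - s) ((∏ i, auxl (a i) (b i)) ^ s) := by
    intro F hF
    have hz : ∀ k, k ≠ m - s → (auxphi q u v F).coeff k = 0 := by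
      intro k hk
      by_contra h
      exact hk (hkey _ F hF le_rfl k h).2.1
    have hc : ∃ c : K, (auxphi q u v F).coeff (m - s) = C c * (∏ i, auxl (a i) (b i)) ^ s := by
      by_cases h : (auxphi q u v F).coeff (m - s) = 0
      · exact ⟨0, by simp [h]⟩
      · exact (hkey _ F hF le_rfl _ h).2.2
    obtain ⟨c, hc⟩ := hc
    refine ⟨c, ?_⟩
    ext1 k
    rw [Polynomial.coeff_smul, Polynomial.coeff_monomial]
    split_ifs with h
    · rw [← h, hc, smul_eq_C_mul]
    · rw [hz k (Ne.symm h), smul_zero]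
  rw [finrank_eq_one_iff']
  refine ⟨⟨F0, hF0⟩, fun h => hF0ne (congrArg Subtype.val h), ?_⟩
  rintro ⟨F, hF⟩
  obtain ⟨c0, hc0⟩ := hform F0 hF0
  obtain ⟨c, hc⟩ := hform F hF
  have hc0ne : c0 ≠ 0 := by
    rintro rfl
    apply hF0ne
    apply hinj
    rw [hc0]
    simp
  refine ⟨c / c0, ?_⟩
  apply Subtype.ext
  apply hinj
  change auxphi q u v ((c / c0) • F0) = auxphi q u v F
  rw [map_smul, hc0, hc, smul_smul, div_mul_cancel₀ _ hc0ne]
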